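/- arXiv:2110.11700 — 3 statements merged into one kernel-verified Lean document; each statement's English description precedes it below -/
import Mathlib

section
/- One step of Plotkin's decomposition rule preserves the pair of instance terms: let t : L.Term ℕ, let σ₁, σ₂ : ℕ → L.Term β, let z : ℕ, n : ℕ, f : L.Functions n, and u, v : Fin n → L.Term β with σ₁ z = Term.func f u and σ₂ z = Term.func f v; let ζ : Fin n → ℕ be injective with ζ i ∉ t.varFinset for all i; let t' := t.subst (fun x => if x = z then Term.func f (fun i => Term.var (ζ i)) else Term.var x), and let σ₁', σ₂' : ℕ → L.Term β satisfy σ₁' (ζ i) = u i and σ₂' (ζ i) = v i for all i, and σ₁' x = σ₁ x and σ₂' x = σ₂ x for all x ∈ t.varFinset with x ≠ z. Then t'.subst σ₁' = t.subst σ₁ and t'.subst σ₂' = t.subst σ₂. -/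
open FirstOrder FirstOrder.Language

theorem plotkin_aux (L : FirstOrder.Language) {β : Type*}
    (t : L.Term ℕ) (σ : ℕ → L.Term β) (z : ℕ) (n : ℕ) (f : L.Functions n)
    (u : Fin n → L.Term β) (hσ : σ z = Term.func f u) (ζ : Fin n → ℕ)
    (σ' : ℕ → L.Term β) (hζ : ∀ i, σ' (ζ i) = u i)
    (h : ∀ x ∈ t.varFinset, x ≠ z → σ' x = σ x) :
    (t.subst (fun x => if x = z then Term.func f (fun i => Term.var (ζ i))
      else Term.var x)).subst σ' = t.subst σ := by
  induction t with
  | var x =>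
    by_cases hx : x = z
    · subst hx
      simp [Term.subst, hσ, hζ]
    · simpa [Term.subst, hx] using h x (by simp [Term.varFinset]) hx
  | func g ts ih =>
    simp only [Term.subst]
    congr 1
    funext i
    refine ih i (fun x hx hxz => h x ?_ hxz)
    simp only [Term.varFinset, Finset.mem_biUnion, Finset.mem_univ, true_and]
    exact ⟨i, hx⟩

/-- One step of Plotkin's decomposition rule preserves the pair of instance terms. -/
theorem plotkin_step_preserves_instances (L : FirstOrder.Language) {β : Type*}
    (t : L.Term ℕ) (σ₁ σ₂ : ℕ → L.Term β) (z : ℕ) (n : ℕ) (f : L.Functions n)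
    (u v : Fin n → L.Term β)
    (hσ₁ : σ₁ z = Term.func f u) (hσ₂ : σ₂ z = Term.func f v)
    (ζ : Fin n → ℕ) (hζinj : Function.Injective ζ)
    (hζfresh : ∀ i, ζ i ∉ t.varFinset)
    (t' : L.Term ℕ)
    (ht' : t' = t.subst
      (fun x => if x = z then Term.func f (fun i => Term.var (ζ i)) else Term.var x))
    (σ₁' σ₂' : ℕ → L.Term β)
    (hσ₁'ζ : ∀ i, σ₁' (ζ i) = u i) (hσ₂'ζ : ∀ i, σ₂' (ζ i) = v i)
    (hσ₁' : ∀ x ∈ t.varFinset, x ≠ z → σ₁' x = σ₁ x)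
    (hσ₂' : ∀ x ∈ t.varFinset, x ≠ z → σ₂' x = σ₂ x) :
    t'.subst σ₁' = t.subst σ₁ ∧ t'.subst σ₂' = t.subst σ₂ := by
  subst ht'
  exact ⟨plotkin_aux L t σ₁ z n f u hσ₁ ζ σ₁' hσ₁'ζ hσ₁',
    plotkin_aux L t σ₂ z n f v hσ₂ ζ σ₂' hσ₂'ζ hσ₂'⟩
end

section
/- The denotation of the matching-logic encoding of an antiunification problem is exactly the two-element set of denotations of its instance terms: for every L-structure M, valuation v : β → M, term t : L.Term ℕ, and substitutions σ₁, σ₂ : ℕ → L.Term β, the set S(t,σ₁,σ₂) := {m : M | ∃ w : ℕ → M, ((∀ x ∈ t.varFinset, w x = (σ₁ x).realize v) ∨ (∀ x ∈ t.varFinset, w x = (σ₂ x).realize v)) ∧ t.realize w = m} equals the pair set {(t.subst σ₁).realize v, (t.subst σ₂).realize v}. -/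
open FirstOrder FirstOrder.Language

theorem realize_congr_varFinset_aux (L : FirstOrder.Language) {M : Type*} [L.Structure M]
    (t : L.Term ℕ) (w w' : ℕ → M) (h : ∀ x ∈ t.varFinset, w x = w' x) :
    t.realize w = t.realize w' := by
  induction t with
  | var x => exact h x (by simp [Term.varFinset])
  | func f ts ih =>
    simp only [Term.realize_func]
    congr 1
    funext i
    refine ih i fun x hx => h x ?_
    simp only [Term.varFinset, Finset.mem_biUnion, Finset.mem_univ, true_and]
    exact ⟨i, hx⟩

/-- The denotation of the matching-logic encoding of an antiunification problem is exactly
the two-element set of denotations of its instance terms. -/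
theorem encoding_denotation (L : FirstOrder.Language) {β : Type*} {M : Type*} [L.Structure M]
    (v : β → M) (t : L.Term ℕ) (σ₁ σ₂ : ℕ → L.Term β) :
    {m : M | ∃ w : ℕ → M,
        ((∀ x ∈ t.varFinset, w x = (σ₁ x).realize v) ∨
          (∀ x ∈ t.varFinset, w x = (σ₂ x).realize v)) ∧
        t.realize w = m} =
      {(t.subst σ₁).realize v, (t.subst σ₂).realize v} := by
  ext m
  simp only [Set.mem_setOf_eq, Set.mem_insert_iff, Set.mem_singleton_iff, Term.realize_subst]
  constructor
  · rintro ⟨w, h | h, rfl⟩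
    · exact Or.inl (realize_congr_varFinset_aux L t _ _ h)
    · exact Or.inr (realize_congr_varFinset_aux L t _ _ h)
  · rintro (rfl | rfl)
    · exact ⟨_, Or.inl fun _ _ => rfl, rfl⟩
    · exact ⟨_, Or.inr fun _ _ => rfl, rfl⟩
end

section
/- (Theorem 2 of the paper, Soundness, syntactic multi-step form.) Define an antiunification problem over L as a pair ⟨t, P⟩ with t : L.Term ℕ and P a finite list of triples (z, u, v) with pairwise distinct first components, where z : ℕ and u, v : L.Term β; P determines substitutions σ₁(P), σ₂(P) : ℕ → L.Term β sending each such z to u, respectively v. Define the step relation ⇝ by Plotkin's rule: if (z, Term.func f u⃗, Term.func f v⃗) ∈ P for an n-ary f, then ⟨t, P⟩ ⇝ ⟨t.subst (fun x => if x = z then Term.func f (fun i => Term.var (ζ i)) else Term.var x), P'⟩, where ζ : Fin n → ℕ is an injective tuple of variables not occurring in t or as first components of P, and P' is P with the triple (z, Term.func f u⃗, Term.func f v⃗) replaced by the triples (ζ i, u⃗ i, v⃗ i). Then: if ⟨Term.var z₀, [(z₀, t₁, t₂)]⟩ ⇝* ⟨t, P⟩ (reflexive-transitive closure), then t.subst (σ₁(P))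 = t₁ and t.subst (σ₂(P)) = t₂; in particular the final generalization t is an antiunifier of t₁ and t₂. -/
open FirstOrder FirstOrder.Language

/-- An antiunification problem over `L` (with instance terms over variables `β`) is a pair
`⟨t, P⟩` of a term `t : L.Term ℕ` and a finite list `P` of triples `(z, u, v)`. -/
abbrev AntiunifProblem (L : FirstOrder.Language) (β : Type*) :=
  L.Term ℕ × List (ℕ × L.Term β × L.Term β)

/-- The step relation `⇝` of Plotkin's antiunification algorithm: a triple
`(z, f(u⃗), f(v⃗))` of `P` is replaced by the triples `(ζ i, u⃗ i, v⃗ i)` for fresh,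
pairwise distinct variables `ζ i`, and `z` is substituted by `f(ζ 0, …, ζ (n-1))` in `t`.
The first components of `P` are required to be pairwise distinct. -/
inductive PlotkinStep (L : FirstOrder.Language) (β : Type*) :
    AntiunifProblem L β → AntiunifProblem L β → Prop
  | step (t : L.Term ℕ) (P : List (ℕ × L.Term β × L.Term β))
      (z : ℕ) (n : ℕ) (f : L.Functions n) (u v : Fin n → L.Term β) (ζ : Fin n → ℕ)
      (hnodup : (P.map Prod.fst).Nodup)
      (hmem : (z, Term.func f u, Term.func f v) ∈ P)
      (hζinj : Function.Injective ζ)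
      (hζfresh : ∀ i, ζ i ∉ t.varFinset ∧ ∀ p ∈ P, ζ i ≠ p.1) :
      PlotkinStep L β (t, P)
        (t.subst
            (fun x => if x = z then Term.func f (fun i => Term.var (ζ i)) else Term.var x),
          (List.ofFn fun i => (ζ i, u i, v i)) ++ P.filter (fun p => p.1 ≠ z))

theorem plotkin_subst_subst {L : FirstOrder.Language} {α β γ : Type*}
    (t : L.Term α) (θ : α → L.Term β) (σ : β → L.Term γ) :
    (t.subst θ).subst σ = t.subst (fun x => (θ x).subst σ) := by
  induction t with
  | var x => rfl
  | func f ts ih => simp only [Term.subst, ih]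

/-- Invariant of the algorithm. -/
theorem plotkin_invariant {L : FirstOrder.Language} {β : Type*}
    (p₀ q : AntiunifProblem L β) (t₁ t₂ : L.Term β)
    (h : Relation.ReflTransGen (PlotkinStep L β) p₀ q)
    (h₀ : ∀ σ : ℕ → L.Term β,
      ((∀ p ∈ p₀.2, σ p.1 = p.2.1) → p₀.1.subst σ = t₁) ∧
      ((∀ p ∈ p₀.2, σ p.1 = p.2.2) → p₀.1.subst σ = t₂)) :
    ∀ σ : ℕ → L.Term β,
      ((∀ p ∈ q.2, σ p.1 = p.2.1) → q.1.subst σ = t₁) ∧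
      ((∀ p ∈ q.2, σ p.1 = p.2.2) → q.1.subst σ = t₂) := by
  induction h with
  | refl => exact h₀
  | tail _ hs ih =>
    cases hs with
    | step t P z n f u v ζ hnodup hmem hinj hfresh =>
      intro σ
      have huniq : ∀ p ∈ P, p.1 = z → p = (z, Term.func f u, Term.func f v) :=
        fun p hp hz => List.inj_on_of_nodup_map hnodup hp hmem hz
      have key : ∀ w : Fin n → L.Term β, (∀ i, σ (ζ i) = w i) →
          (t.subst (fun x => if x = z then Term.func f (fun i => Term.var (ζ i))
            else Term.var x)).subst σ
          = t.subst (fun x => if x = z then Term.func f w else σ x) := by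
        intro w hw
        rw [plotkin_subst_subst]
        congr 1
        funext x
        by_cases hx : x = z
        · simp [hx, Term.subst, hw]
        · simp [hx, Term.subst]
      constructor
      · intro hσ
        dsimp only at hσ ⊢
        rw [key u (fun i => hσ (ζ i, u i, v i)
          (List.mem_append_left _ (List.mem_ofFn.2 ⟨i, rfl⟩)))]
        refine (ih _).1 fun p hp => ?_
        by_cases hz : p.1 = z
        · rw [huniq p hp hz]; simp
        · simp only [hz, if_false]
          exact hσ p (List.mem_append_right _ (List.mem_filter.2 ⟨hp, by simpa using hz⟩))
      · intro hσ
        dsimp only at hσ ⊢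
        rw [key v (fun i => hσ (ζ i, u i, v i)
          (List.mem_append_left _ (List.mem_ofFn.2 ⟨i, rfl⟩)))]
        refine (ih _).2 fun p hp => ?_
        by_cases hz : p.1 = z
        · rw [huniq p hp hz]; simp
        · simp only [hz, if_false]
          exact hσ p (List.mem_append_right _ (List.mem_filter.2 ⟨hp, by simpa using hz⟩))

/-- Theorem 2 (Soundness, syntactic multi-step form): if Plotkin's algorithm, started on
`⟨z₀, {z₀ ↦ t₁ ⊔ t₂}⟩`, reaches `⟨t, P⟩`, then for the substitutions `σ₁, σ₂` determined
by `P` (sending each first component to the corresponding left, resp. right, component)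
we have `t.subst σ₁ = t₁` and `t.subst σ₂ = t₂`; in particular `t` is an antiunifier of
`t₁` and `t₂`. -/
theorem plotkin_soundness (L : FirstOrder.Language) {β : Type*}
    (z₀ : ℕ) (t₁ t₂ : L.Term β) (t : L.Term ℕ) (P : List (ℕ × L.Term β × L.Term β))
    (h : Relation.ReflTransGen (PlotkinStep L β) (Term.var z₀, [(z₀, t₁, t₂)]) (t, P))
    (σ₁ σ₂ : ℕ → L.Term β)
    (hσ₁ : ∀ p ∈ P, σ₁ p.1 = p.2.1)
    (hσ₂ : ∀ p ∈ P, σ₂ p.1 = p.2.2) :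
    (t.subst σ₁ = t₁ ∧ t.subst σ₂ = t₂) ∧
      ∃ σ₁' σ₂' : ℕ → L.Term β, t.subst σ₁' = t₁ ∧ t.subst σ₂' = t₂ := by
  have key := plotkin_invariant _ _ t₁ t₂ h (fun σ =>
    ⟨fun hp => hp (z₀, t₁, t₂) (by simp), fun hp => hp (z₀, t₁, t₂) (by simp)⟩)
  have h₁ : t.subst σ₁ = t₁ := (key σ₁).1 hσ₁
  have h₂ : t.subst σ₂ = t₂ := (key σ₂).2 hσ₂
  exact ⟨⟨h₁, h₂⟩, σ₁, σ₂, h₁, h₂⟩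
end
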